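/- arXiv:2407.13762 — 2 statements merged into one kernel-verified Lean document; each statement's English description precedes it below -/
import Mathlib

section
/- Fix T > 0, a > 0, and let θ : [0,T] → ℝⁿ be continuous with θ_0 ∈ 𝒳ₙ and θ¹_t ≤ θ²_t ≤ ⋯ ≤ θⁿ_t ≤ θ¹_t + 2π for all t ∈ [0,T]. Let τ_coll := inf{ t ∈ [0,T] : min_{1≤j≤n}(θ^{j+1}_t − θ^j_t) = 0 } (with θ^{n+1} = θ¹ + 2π, and τ_coll := ∞ if no such t exists). Then: (i) if τ_coll ≤ T, then sup_{t < τ_coll} J^a_t(θ) = ∞; (ii) if τ_coll > T (so θ takes values in 𝒳ₙ on [0,T]), then J^a_T(θ) < ∞ if and only if E_T(θ^j) < ∞ for every j ∈ {1,…,n}. -/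
open MeasureTheory Filter Set
open scoped Real Topology ENNReal Classical

noncomputable section

/-- The configuration space `𝒳ₙ` of `n` ordered points on (a lift of) the circle:
`θ¹ < θ² < ⋯ < θⁿ < θ¹ + 2π`. -/
def Xspace (n : ℕ) : Set (Fin n → ℝ) :=
  {x | StrictMono x ∧ ∀ i j : Fin n, x i < x j + 2 * π}

/-- The value `θ^{j+1}`, with the convention `θ^{n+1} = θ¹ + 2π`. -/
def nextVal {n : ℕ} (x : Fin n → ℝ) (j : Fin n) : ℝ :=
  if h : (j : ℕ) + 1 < n then x ⟨(j : ℕ) + 1, h⟩ else x ⟨0, j.pos⟩ + 2 * π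

/-- The gap `θ^{j+1} - θ^j` (with wrap-around convention). -/
def gap {n : ℕ} (x : Fin n → ℝ) (j : Fin n) : ℝ := nextVal x j - x j

/-- The minimal gap `Δ(θ) = min_j (θ^{j+1} - θ^j)`. -/
def minGap {n : ℕ} (x : Fin n → ℝ) : ℝ := ⨅ j : Fin n, gap x j

/-- `d(θ) := max_j |2π/n - (θ^{j+1} - θ^j)|`. -/
def dGap {n : ℕ} (x : Fin n → ℝ) : ℝ := ⨆ j : Fin n, |2 * π / n - gap x j|

/-- `φ^j(θ) = ∑_{k ≠ j} cot((θ^j - θ^k)/2)`. -/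
def phi {n : ℕ} (x : Fin n → ℝ) (j : Fin n) : ℝ :=
  ∑ k ∈ Finset.univ.erase j, Real.cot ((x j - x k) / 2)

/-- `φ_a^j := (a/4) φ^j`. -/
def phiA {n : ℕ} (a : ℝ) (x : Fin n → ℝ) (j : Fin n) : ℝ := a / 4 * phi x j

/-- Absolute continuity of every coordinate of `θ` on `[0, T]`: each component is the
integral of a (locally) integrable function. -/
def AbsCont {n : ℕ} (T : ℝ) (θ : ℝ → Fin n → ℝ) : Prop :=
  ∃ v : ℝ → Fin n → ℝ, (∀ j, IntegrableOn (fun s => v s j) (Icc 0 T)) ∧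
    ∀ t ∈ Icc (0 : ℝ) T, ∀ j, θ t j = θ 0 j + ∫ s in (0 : ℝ)..t, v s j

/-- Truncated multiradial Dirichlet energy `J_T(θ)`. -/
def mEnergy (n : ℕ) (T : ℝ) (θ : ℝ → Fin n → ℝ) : ℝ≥0∞ :=
  if AbsCont T θ then
    ENNReal.ofReal (1 / 2) *
      ∫⁻ s in Ioc (0 : ℝ) T,
        ENNReal.ofReal (∑ j, (deriv (fun t => θ t j) s - 2 * phi (θ s) j) ^ 2)
  else ⊤

/-- Multiradial Dirichlet energy `J(θ) = lim_{T→∞} J_T(θ)`, the supremum of the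
nondecreasing family `J_T(θ)`. -/
def mEnergyInf (n : ℕ) (θ : ℝ → Fin n → ℝ) : ℝ≥0∞ := ⨆ T : ℝ, mEnergy n T θ

/-- Truncated multiradial Dirichlet energy with parameter `a`, defined to be `∞`
unless `θ` takes values in `𝒳ₙ` on `[0,T]` and is absolutely continuous. -/
def mEnergyAX (n : ℕ) (a T : ℝ) (θ : ℝ → Fin n → ℝ) : ℝ≥0∞ :=
  if (∀ t ∈ Icc (0 : ℝ) T, θ t ∈ Xspace n) ∧ AbsCont T θ then
    ENNReal.ofReal (1 / 2) *
      ∫⁻ s in Ioc (0 : ℝ) T,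
        ENNReal.ofReal (∑ j, (deriv (fun t => θ t j) s - 2 * phiA a (θ s) j) ^ 2)
  else ⊤

/-- Absolute continuity of a scalar function on `[0,T]`. -/
def AbsCont1 (T : ℝ) (f : ℝ → ℝ) : Prop :=
  ∃ v : ℝ → ℝ, IntegrableOn v (Icc 0 T) ∧
    ∀ t ∈ Icc (0 : ℝ) T, f t = f 0 + ∫ s in (0 : ℝ)..t, v s

/-- Dirichlet energy of a scalar function on `[0,T]`. -/
def dEnergy1 (T : ℝ) (f : ℝ → ℝ) : ℝ≥0∞ :=
  if AbsCont1 T f then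
    ENNReal.ofReal (1 / 2) * ∫⁻ s in Ioc (0 : ℝ) T, ENNReal.ofReal (deriv f s ^ 2)
  else ⊤

/-! `φ` is the gradient of the potential `W(θ) = ∑_{j ≠ k} log |sin((θ^j - θ^k)/2)|`. Since
`|v - b|² ≥ -4 ⟨b, v⟩`, integrating the derivative of `W` along the curve bounds the energy up to
time `t` below by `a (W(θ_0) - W(θ_t))`, and `W → -∞` at a collision. In the absence of collisions
the drift is bounded on the compact range of the curve, so `θ'` and `θ'` minus the drift are
simultaneously square integrable. -/

/-! ### Absolutely continuous curves -/

lemma absolutelyContinuousOnInterval_of_dist_le {X Y : Type*} [PseudoMetricSpace X]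
    [PseudoMetricSpace Y] {f : ℝ → X} {g : ℝ → Y} {a b K : ℝ}
    (hf : AbsolutelyContinuousOnInterval f a b)
    (hg : ∀ x ∈ uIcc a b, ∀ y ∈ uIcc a b, dist (g x) (g y) ≤ K * dist (f x) (f y)) :
    AbsolutelyContinuousOnInterval g a b := by
  refine squeeze_zero' (Eventually.of_forall fun E => Finset.sum_nonneg fun i _ => dist_nonneg)
    ?_ (by simpa only [mul_zero] using Tendsto.const_mul K hf)
  filter_upwards [mem_inf_of_right (mem_principal_self _)] with E hE
  rw [Finset.mul_sum]
  exact Finset.sum_le_sum fun i hi => hg _ (hE.1 i hi).1 _ (hE.1 i hi).2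

lemma absolutelyContinuousOnInterval_pi {ι : Type*} [Fintype ι] {X : ι → Type*}
    [∀ i, PseudoMetricSpace (X i)] {f : ℝ → ∀ i, X i} {a b : ℝ}
    (hf : ∀ i, AbsolutelyContinuousOnInterval (fun t => f t i) a b) :
    AbsolutelyContinuousOnInterval f a b := by
  refine squeeze_zero (fun E => Finset.sum_nonneg fun i _ => dist_nonneg) (fun E => ?_)
    (by simpa only [Finset.sum_const_zero] using tendsto_finsetSum Finset.univ fun i _ => hf i)
  rw [Finset.sum_comm]
  refine Finset.sum_le_sum fun m _ => (dist_pi_le_iff (by positivity)).2 fun i => ?_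
  exact Finset.single_le_sum (f := fun i => dist (f (E.2 m).1 i) (f (E.2 m).2 i))
    (fun _ _ => dist_nonneg) (Finset.mem_univ i)

lemma absolutelyContinuousOnInterval_comp_of_contDiffOn {E F : Type*} [NormedAddCommGroup E]
    [NormedSpace ℝ E] [NormedAddCommGroup F] [NormedSpace ℝ F] {U : Set E} (hU : IsOpen U)
    {W : E → F} (hW : ContDiffOn ℝ 1 W U) {u : ℝ → E} {a b : ℝ}
    (hu : AbsolutelyContinuousOnInterval u a b) (huU : MapsTo u (uIcc a b) U) :
    AbsolutelyContinuousOnInterval (fun t => W (u t)) a b := by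
  have hloc : LocallyLipschitzOn (u '' uIcc a b) W := by
    rintro _ ⟨t, ht, rfl⟩
    obtain ⟨K, s, hs, hK⟩ :=
      (hW.contDiffAt (hU.mem_nhds (huU ht))).exists_lipschitzOnWith
    exact ⟨K, s, mem_nhdsWithin_of_mem_nhds hs, hK⟩
  obtain ⟨K, hK⟩ := hloc.exists_lipschitzOnWith_of_compact
    (isCompact_uIcc.image_of_continuousOn hu.continuousOn)
  exact absolutelyContinuousOnInterval_of_dist_le hu fun x hx y hy =>
    hK.dist_le_mul _ (mem_image_of_mem u hx) _ (mem_image_of_mem u hy)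

lemma AbsCont1.absolutelyContinuousOnInterval {T : ℝ} {f : ℝ → ℝ} (hT : 0 ≤ T)
    (hf : AbsCont1 T f) : AbsolutelyContinuousOnInterval f 0 T := by
  obtain ⟨v, hv, hfv⟩ := hf
  have hi : IntervalIntegrable v volume 0 T :=
    (intervalIntegrable_iff_integrableOn_Icc_of_le hT).2 hv
  refine absolutelyContinuousOnInterval_of_dist_le (K := 1)
    (hi.absolutelyContinuousOnInterval_intervalIntegral left_mem_uIcc) fun x hx y hy => ?_
  rw [uIcc_of_le hT] at hx hy
  rw [hfv x hx, hfv y hy, dist_add_left, one_mul]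

lemma absCont_iff_forall_absCont1 {n : ℕ} {T : ℝ} {θ : ℝ → Fin n → ℝ} :
    AbsCont T θ ↔ ∀ j, AbsCont1 T (fun t => θ t j) := by
  constructor
  · rintro ⟨v, hv, hθ⟩ j
    exact ⟨fun s => v s j, hv j, fun t ht => hθ t ht j⟩
  · intro h
    choose v hv hθ using h
    exact ⟨fun s j => v j s, hv, fun t ht j => hθ j t ht⟩

lemma AbsCont.absolutelyContinuousOnInterval {n : ℕ} {T : ℝ} {θ : ℝ → Fin n → ℝ} (hT : 0 ≤ T)
    (hθ : AbsCont T θ) : AbsolutelyContinuousOnInterval θ 0 T :=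
  absolutelyContinuousOnInterval_pi fun j =>
    (absCont_iff_forall_absCont1.1 hθ j).absolutelyContinuousOnInterval hT

/-! ### Curves driven by a gradient field -/

lemma ofReal_integral_le_lintegral_ofReal {α : Type*} [MeasurableSpace α] {μ : Measure α}
    {f : α → ℝ} (hf : Integrable f μ) :
    ENNReal.ofReal (∫ x, f x ∂μ) ≤ ∫⁻ x, ENNReal.ofReal (f x) ∂μ := by
  rw [integral_eq_lintegral_pos_part_sub_lintegral_neg_part hf]
  exact (ENNReal.ofReal_le_ofReal (sub_le_self _ ENNReal.toReal_nonneg)).trans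
    ENNReal.ofReal_toReal_le

lemma neg_four_mul_dotProduct_le_sum_sq_sub {ι : Type*} [Fintype ι] (b v : ι → ℝ) :
    -4 * (b ⬝ᵥ v) ≤ ∑ j, (v j - b j) ^ 2 := by
  rw [dotProduct, Finset.mul_sum]
  exact Finset.sum_le_sum fun j _ => by linarith [sq_nonneg (v j + b j)]

lemma ofReal_four_mul_sub_le_lintegral_sum_sq {ι : Type*} [Fintype ι] {U : Set (ι → ℝ)}
    (hU : IsOpen U) {W : (ι → ℝ) → ℝ} {b : (ι → ℝ) → ι → ℝ} (hW : ContDiffOn ℝ 1 W U)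
    (hgrad : ∀ x ∈ U, ∀ v, fderiv ℝ W x v = b x ⬝ᵥ v) {u : ℝ → ι → ℝ} {c d : ℝ} (hcd : c ≤ d)
    (hu : AbsolutelyContinuousOnInterval u c d) (huU : MapsTo u (Icc c d) U) :
    ENNReal.ofReal (4 * (W (u c) - W (u d))) ≤
      ∫⁻ s in Ioc c d, ENNReal.ofReal (∑ j, (deriv (fun t => u t j) s - b (u s) j) ^ 2) := by
  have hWu : AbsolutelyContinuousOnInterval (fun t => W (u t)) c d :=
    absolutelyContinuousOnInterval_comp_of_contDiffOn hU hW hu (by rwa [uIcc_of_le hcd])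
  have hpointwise : ∀ᵐ s ∂volume.restrict (Ioc c d), -4 * deriv (fun t => W (u t)) s ≤
      ∑ j, (deriv (fun t => u t j) s - b (u s) j) ^ 2 := by
    rw [ae_restrict_iff' measurableSet_Ioc]
    filter_upwards [hu.boundedVariationOn.ae_differentiableAt_of_mem_uIcc] with s hdiff hs
    have hs' : s ∈ Icc c d := Ioc_subset_Icc_self hs
    have hus : HasDerivAt u (deriv u s) s := (hdiff (by rwa [uIcc_of_le hcd])).hasDerivAt
    have hWs : HasFDerivAt W (fderiv ℝ W (u s)) (u s) :=
      ((hW.contDiffAt (hU.mem_nhds (huU hs'))).differentiableAt one_ne_zero).hasFDerivAt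
    have hchain : deriv (fun t => W (u t)) s = b (u s) ⬝ᵥ deriv u s :=
      (hWs.comp_hasDerivAt s hus).deriv.trans (hgrad _ (huU hs') _)
    simp only [hchain, (hasDerivAt_pi.1 hus _).deriv]
    exact neg_four_mul_dotProduct_le_sum_sq_sub _ _
  calc ENNReal.ofReal (4 * (W (u c) - W (u d)))
      = ENNReal.ofReal (∫ s in Ioc c d, -4 * deriv (fun t => W (u t)) s) := by
        rw [integral_const_mul, ← intervalIntegral.integral_of_le hcd, hWu.integral_deriv_eq_sub]
        ring_nf
    _ ≤ ∫⁻ s in Ioc c d, ENNReal.ofReal (-4 * deriv (fun t => W (u t)) s) :=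
        ofReal_integral_le_lintegral_ofReal (hWu.intervalIntegrable_deriv.1.const_mul _)
    _ ≤ _ := lintegral_mono_ae (hpointwise.mono fun s hs => ENNReal.ofReal_le_ofReal hs)

/-! ### The configuration space and its boundary -/

/-- The weakly ordered configurations `θ¹ ≤ θ² ≤ ⋯ ≤ θⁿ ≤ θ¹ + 2π`, i.e. the closure of `𝒳ₙ`, in
which collisions are allowed. As in `Xspace`, the last inequality is imposed on all pairs. -/
def closedXspace (n : ℕ) : Set (Fin n → ℝ) :=
  {x | Monotone x ∧ ∀ i j : Fin n, x i ≤ x j + 2 * π}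

lemma gap_castSucc {n : ℕ} (x : Fin (n + 1) → ℝ) (j : Fin n) :
    gap x j.castSucc = x j.succ - x j.castSucc := by
  simp [gap, nextVal, Fin.succ]

lemma gap_last {n : ℕ} (x : Fin (n + 1) → ℝ) :
    gap x (Fin.last n) = x 0 + 2 * π - x (Fin.last n) := by
  simp [gap, nextVal]

lemma mem_Xspace_iff_forall_gap_pos {n : ℕ} {x : Fin n → ℝ} :
    x ∈ Xspace n ↔ ∀ j, 0 < gap x j := by
  cases n with
  | zero => exact iff_of_true ⟨fun i => i.elim0, fun i => i.elim0⟩ fun j => j.elim0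
  | succ m =>
    simp only [Fin.forall_fin_succ', gap_castSucc, gap_last, sub_pos, ← Fin.strictMono_iff_lt_succ]
    refine and_congr_right fun hmono => ⟨fun h => h _ _, fun h i j => ?_⟩
    linarith [hmono.monotone (Fin.le_last i), hmono.monotone (Fin.zero_le j)]

lemma gap_nonneg {n : ℕ} {x : Fin n → ℝ} (hx : x ∈ closedXspace n) (j : Fin n) : 0 ≤ gap x j := by
  cases n with
  | zero => exact j.elim0
  | succ m =>
    refine Fin.lastCases ?_ (fun i => ?_) j
    · rw [gap_last]
      exact sub_nonneg.2 (hx.2 _ _)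
    · rw [gap_castSucc]
      exact sub_nonneg.2 (hx.1 i.castSucc_le_succ)

lemma minGap_eq_zero_iff_notMem_Xspace {n : ℕ} (hn : 1 ≤ n) {x : Fin n → ℝ}
    (hx : x ∈ closedXspace n) : minGap x = 0 ↔ x ∉ Xspace n := by
  have : Nonempty (Fin n) := ⟨⟨0, hn⟩⟩
  have hpos : 0 < minGap x ↔ x ∈ Xspace n := by
    rw [mem_Xspace_iff_forall_gap_pos]
    refine ⟨fun h j => h.trans_le (ciInf_le (finite_range _).bddBelow j), fun h => ?_⟩
    obtain ⟨j, hj⟩ := exists_eq_ciInf_of_finite (f := gap x)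
    exact (h j).trans_eq hj
  rw [← hpos, not_lt]
  exact ⟨le_of_eq, fun h => h.antisymm (Real.iInf_nonneg (gap_nonneg hx))⟩

lemma isOpen_Xspace (n : ℕ) : IsOpen (Xspace n) := by
  have : Xspace n = ⋂ j, {x | 0 < gap x j} := by
    ext x
    simp [mem_Xspace_iff_forall_gap_pos]
  rw [this]
  refine isOpen_iInter_of_finite fun j => isOpen_lt continuous_const ?_
  unfold gap nextVal
  split_ifs <;> fun_prop

lemma sin_half_sub_ne_zero_of_mem_Xspace {n : ℕ} {x : Fin n → ℝ} (hx : x ∈ Xspace n) {j k : Fin n}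
    (hkj : k ≠ j) : Real.sin ((x j - x k) / 2) ≠ 0 := by
  have hjk := hx.2 j k
  have hkj' := hx.2 k j
  rcases (hx.1.injective.ne hkj).lt_or_gt with h | h
  · exact (Real.sin_pos_of_pos_of_lt_pi (by linarith) (by linarith)).ne'
  · exact (Real.sin_neg_of_neg_of_neg_pi_lt (by linarith) (by linarith)).ne

lemma exists_ne_sin_half_sub_eq_zero {n : ℕ} {x : Fin n → ℝ} (hx : x ∈ closedXspace n)
    (hx' : x ∉ Xspace n) : ∃ j k, k ≠ j ∧ Real.sin ((x j - x k) / 2) = 0 := by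
  have hfail : (∃ i j, i < j ∧ x j ≤ x i) ∨ ∃ i j, x j + 2 * π ≤ x i := by
    by_contra! h
    exact hx' ⟨fun i j => h.1 i j, h.2⟩
  rcases hfail with ⟨i, j, hij, hle⟩ | ⟨i, j, hle⟩
  · refine ⟨i, j, hij.ne', ?_⟩
    rw [hle.antisymm (hx.1 hij.le), sub_self, zero_div, Real.sin_zero]
  · refine ⟨i, j, ?_, ?_⟩
    · rintro rfl
      linarith [Real.pi_pos]
    · rw [(hx.2 i j).antisymm hle, show (x j + 2 * π - x j) / 2 = π by ring, Real.sin_pi]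

/-! ### The logarithmic potential -/

/-- The logarithmic interaction potential `∑_{j ≠ k} log |sin((θ^j - θ^k)/2)|` over ordered pairs,
whose gradient is `φ`. The absolute value is supplied by `Real.log`. -/
def logSinePotential {n : ℕ} (x : Fin n → ℝ) : ℝ :=
  ∑ j, ∑ k ∈ Finset.univ.erase j, Real.log (Real.sin ((x j - x k) / 2))

lemma contDiffOn_logSinePotential {n : ℕ} {m : WithTop ℕ∞} :
    ContDiffOn ℝ m (logSinePotential (n := n)) (Xspace n) :=
  ContDiffOn.sum fun _ _ => ContDiffOn.sum fun _ hk => ContDiffOn.log (by fun_prop)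
    fun _ hx => sin_half_sub_ne_zero_of_mem_Xspace hx (Finset.ne_of_mem_erase hk)

lemma sum_sum_erase_mul_sub_of_antisymm {ι R : Type*} [Fintype ι] [DecidableEq ι] [CommRing R]
    {c : ι → ι → R} (hc : ∀ j k, c k j = -c j k) (v : ι → R) :
    ∑ j, ∑ k ∈ Finset.univ.erase j, c j k * (v j - v k) =
      2 * ∑ j, (∑ k ∈ Finset.univ.erase j, c j k) * v j := by
  have hswap : ∑ j, ∑ k ∈ Finset.univ.erase j, c j k * v k =
      -∑ j, ∑ k ∈ Finset.univ.erase j, c j k * v j := by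
    rw [Finset.sum_comm' (t' := Finset.univ) (s' := fun k => Finset.univ.erase k)
      (by simp [ne_comm])]
    simp only [← Finset.sum_neg_distrib, ← neg_mul, ← hc]
  simp only [mul_sub, Finset.sum_sub_distrib, hswap, Finset.sum_mul]
  ring

lemma hasFDerivAt_log_sin_half_sub {ι : Type*} [Finite ι] {x : ι → ℝ} {j k : ι}
    (hx : Real.sin ((x j - x k) / 2) ≠ 0) :
    HasFDerivAt (fun y : ι → ℝ => Real.log (Real.sin ((y j - y k) / 2)))
      ((Real.cot ((x j - x k) / 2) / 2) • (ContinuousLinearMap.proj (R := ℝ) j -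
        ContinuousLinearMap.proj (R := ℝ) (φ := fun _ : ι => ℝ) k)) x := by
  cases nonempty_fintype ι
  have hlin := ((hasFDerivAt_apply (𝕜 := ℝ) j x).sub (hasFDerivAt_apply k x)).mul_const (2⁻¹)
  refine (hlin.sin.log hx).congr_fderiv ?_
  rw [Real.cot_eq_cos_div_sin, smul_smul, smul_smul]
  congr 1
  simp only [Pi.sub_apply, div_eq_mul_inv]
  ring

lemma fderiv_logSinePotential {n : ℕ} {x : Fin n → ℝ} (hx : x ∈ Xspace n) (v : Fin n → ℝ) :
    fderiv ℝ logSinePotential x v = phi x ⬝ᵥ v := by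
  have hcot : ∀ j k, Real.cot ((x k - x j) / 2) / 2 = -(Real.cot ((x j - x k) / 2) / 2) := by
    intro j k
    rw [← neg_sub, neg_div, Real.cot_eq_cos_div_sin, Real.cos_neg, Real.sin_neg, div_neg, neg_div,
      Real.cot_eq_cos_div_sin]
  have hsum := HasFDerivAt.fun_sum fun j (_ : j ∈ Finset.univ) => HasFDerivAt.fun_sum
    fun k (hk : k ∈ Finset.univ.erase j) => hasFDerivAt_log_sin_half_sub
      (sin_half_sub_ne_zero_of_mem_Xspace hx (Finset.ne_of_mem_erase hk))
  rw [show fderiv ℝ logSinePotential x = _ from hsum.fderiv]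
  simp only [sum_apply, smul_apply, sub_apply, ContinuousLinearMap.proj_apply, smul_eq_mul,
    sum_sum_erase_mul_sub_of_antisymm hcot, dotProduct, phi, ← Finset.sum_div, Finset.mul_sum]
  exact Finset.sum_congr rfl fun j _ => by ring

lemma sum_le_single_of_nonpos {ι N : Type*} [AddCommMonoid N] [Preorder N] [AddLeftMono N]
    {s : Finset ι} {f : ι → N} (hf : ∀ i ∈ s, f i ≤ 0) {i : ι} (hi : i ∈ s) :
    ∑ l ∈ s, f l ≤ f i := by
  simpa only [Finset.sum_singleton] using Finset.sum_le_sum_of_subset_of_nonpos'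
    (Finset.singleton_subset_iff.2 hi) fun l hl _ => hf l hl

lemma logSinePotential_le {n : ℕ} (x : Fin n → ℝ) {j k : Fin n} (hkj : k ≠ j) :
    logSinePotential x ≤ Real.log (Real.sin ((x j - x k) / 2)) := by
  have hterm : ∀ i l, Real.log (Real.sin ((x i - x l) / 2)) ≤ 0 := fun i l => by
    rw [← Real.log_abs]
    exact Real.log_nonpos (abs_nonneg _) (Real.abs_sin_le_one _)
  calc logSinePotential x
      ≤ ∑ l ∈ Finset.univ.erase j, Real.log (Real.sin ((x j - x l) / 2)) :=
        sum_le_single_of_nonpos (fun i _ => Finset.sum_nonpos fun l _ => hterm i l)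
          (Finset.mem_univ j)
    _ ≤ Real.log (Real.sin ((x j - x k) / 2)) :=
        sum_le_single_of_nonpos (fun l _ => hterm j l)
          (Finset.mem_erase.2 ⟨hkj, Finset.mem_univ k⟩)

lemma tendsto_logSinePotential_atBot {n : ℕ} {y : Fin n → ℝ} (hy : y ∈ closedXspace n)
    (hy' : y ∉ Xspace n) : Tendsto logSinePotential (𝓝[Xspace n] y) atBot := by
  obtain ⟨j, k, hkj, hsin⟩ := exists_ne_sin_half_sub_eq_zero hy hy'
  refine tendsto_atBot_mono (fun x => logSinePotential_le x hkj)
    (Real.tendsto_log_nhdsNE_zero.comp (tendsto_nhdsWithin_iff.2 ⟨?_, ?_⟩))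
  · rw [← hsin]
    exact tendsto_nhdsWithin_of_tendsto_nhds (Continuous.tendsto (by fun_prop) y)
  · exact eventually_mem_nhdsWithin.mono fun x hx => sin_half_sub_ne_zero_of_mem_Xspace hx hkj

/-! ### The energy -/

lemma ofReal_logSinePotential_sub_le_mEnergyAX {n : ℕ} {a t : ℝ} {θ : ℝ → Fin n → ℝ}
    (ht : 0 ≤ t) : ENNReal.ofReal (a * (logSinePotential (θ 0) - logSinePotential (θ t))) ≤
      mEnergyAX n a t θ := by
  unfold mEnergyAX
  split_ifs with hθ
  swap
  · exact le_top
  have hgrad : ∀ x ∈ Xspace n, ∀ v, fderiv ℝ (fun y => a / 2 * logSinePotential y) x v =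
      (fun j => 2 * phiA a x j) ⬝ᵥ v := by
    intro x hx v
    have hdiff : DifferentiableAt ℝ logSinePotential x :=
      (contDiffOn_logSinePotential.contDiffAt ((isOpen_Xspace n).mem_nhds hx)).differentiableAt
        one_ne_zero
    rw [fderiv_const_mul hdiff, smul_apply, fderiv_logSinePotential hx,
      ← smul_dotProduct]
    congr 1
    ext j
    simp only [Pi.smul_apply, smul_eq_mul, phiA]
    ring
  have hle := ofReal_four_mul_sub_le_lintegral_sum_sq (isOpen_Xspace n)
    (contDiffOn_const.mul contDiffOn_logSinePotential) hgrad ht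
    (hθ.2.absolutelyContinuousOnInterval ht) hθ.1
  refine le_trans (le_of_eq ?_) (mul_le_mul_right hle (ENNReal.ofReal (1 / 2)))
  rw [← ENNReal.ofReal_mul (by norm_num)]
  congr 1
  ring

lemma iSup_mEnergyAX_eq_top_of_notMem_Xspace {n : ℕ} {a τ : ℝ} {θ : ℝ → Fin n → ℝ} (ha : 0 < a)
    (hτ : 0 < τ) (hcont : ContinuousWithinAt θ (Iio τ) τ) (hX : ∀ t ∈ Ico 0 τ, θ t ∈ Xspace n)
    (hclosed : θ τ ∈ closedXspace n) (hτX : θ τ ∉ Xspace n) :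
    (⨆ t ∈ Ico (0 : ℝ) τ, mEnergyAX n a t θ) = ⊤ := by
  by_contra hM
  set M := ⨆ t ∈ Ico (0 : ℝ) τ, mEnergyAX n a t θ
  have hbound : ∀ t ∈ Ico 0 τ,
      logSinePotential (θ 0) - M.toReal / a ≤ logSinePotential (θ t) := by
    intro t ht
    have hle : ENNReal.ofReal (a * (logSinePotential (θ 0) - logSinePotential (θ t))) ≤ M :=
      (ofReal_logSinePotential_sub_le_mEnergyAX ht.1).trans
        (le_iSup₂ (f := fun t (_ : t ∈ Ico (0 : ℝ) τ) => mEnergyAX n a t θ) t ht)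
    linarith [(le_div_iff₀' ha).2 ((ENNReal.ofReal_le_iff_le_toReal hM).1 hle)]
  have hIco : ∀ᶠ t in 𝓝[<] τ, t ∈ Ico 0 τ := Ico_mem_nhdsLT hτ
  have hblowup : Tendsto (fun t => logSinePotential (θ t)) (𝓝[<] τ) atBot :=
    (tendsto_logSinePotential_atBot hclosed hτX).comp
      (tendsto_nhdsWithin_iff.2 ⟨hcont, hIco.mono hX⟩)
  obtain ⟨t, ht, htI⟩ := ((hblowup.eventually_lt_atBot _).and hIco).exists
  exact (hbound t htI).not_gt ht

lemma lintegral_ofReal_sq_lt_top_iff_memLp {α : Type*} [MeasurableSpace α] {μ : Measure α}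
    {f : α → ℝ} (hf : AEStronglyMeasurable f μ) :
    ∫⁻ x, ENNReal.ofReal (f x ^ 2) ∂μ < ⊤ ↔ MemLp f 2 μ := by
  have hsq : AEStronglyMeasurable (fun x => f x ^ 2) μ := hf.pow 2
  rw [memLp_two_iff_integrable_sq hf, Integrable, and_iff_right hsq,
    hasFiniteIntegral_iff_ofReal (Eventually.of_forall fun x => sq_nonneg (f x))]

lemma lintegral_ofReal_sum_sq_lt_top_iff_memLp {α ι : Type*} [Fintype ι] [MeasurableSpace α]
    {μ : Measure α} {f : ι → α → ℝ} (hf : ∀ j, AEStronglyMeasurable (f j) μ) :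
    ∫⁻ x, ENNReal.ofReal (∑ j, f j x ^ 2) ∂μ < ⊤ ↔ ∀ j, MemLp (f j) 2 μ := by
  simp_rw [ENNReal.ofReal_sum_of_nonneg fun _ _ => sq_nonneg _]
  rw [lintegral_finsetSum' _ fun j _ => ((hf j).aemeasurable.pow_const 2).ennreal_ofReal,
    ENNReal.sum_lt_top]
  simp only [Finset.mem_univ, forall_const, lintegral_ofReal_sq_lt_top_iff_memLp (hf _)]

lemma memLp_sub_iff_of_memLp {α E : Type*} [MeasurableSpace α] {μ : Measure α}
    [NormedAddCommGroup E] {p : ℝ≥0∞} {f g : α → E} (hg : MemLp g p μ) :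
    MemLp (fun x => f x - g x) p μ ↔ MemLp f p μ :=
  ⟨fun h => (memLp_congr_ae (.of_forall fun x => sub_add_cancel (f x) (g x))).1 (h.add hg),
    fun h => h.sub hg⟩

lemma ofReal_mul_lt_top_iff {c : ℝ} (hc : 0 < c) {x : ℝ≥0∞} :
    ENNReal.ofReal c * x < ⊤ ↔ x < ⊤ :=
  ⟨fun h => ENNReal.lt_top_of_mul_ne_top_right h.ne (ENNReal.ofReal_pos.2 hc).ne',
    ENNReal.mul_lt_top ENNReal.ofReal_lt_top⟩

lemma dEnergy1_lt_top_iff {T : ℝ} {f : ℝ → ℝ} :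
    dEnergy1 T f < ⊤ ↔ AbsCont1 T f ∧ MemLp (deriv f) 2 (volume.restrict (Ioc 0 T)) := by
  rw [← lintegral_ofReal_sq_lt_top_iff_memLp (measurable_deriv f).aestronglyMeasurable]
  unfold dEnergy1
  split_ifs with hf
  · rw [ofReal_mul_lt_top_iff one_half_pos, and_iff_right hf]
  · exact iff_of_false (lt_irrefl _) fun h => hf h.1

lemma continuousOn_phiA {n : ℕ} (a : ℝ) (j : Fin n) :
    ContinuousOn (fun x => phiA a x j) (Xspace n) := by
  unfold phiA phi
  refine continuousOn_const.mul (continuousOn_finsetSum _ fun k hk => ?_)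
  simp only [Real.cot_eq_cos_div_sin]
  exact ContinuousOn.div (by fun_prop) (by fun_prop)
    fun x hx => sin_half_sub_ne_zero_of_mem_Xspace hx (Finset.ne_of_mem_erase hk)

lemma memLp_Ioc_of_continuousOn_Icc {E : Type*} [NormedAddCommGroup E]
    {f : ℝ → E} {c d : ℝ} {p : ℝ≥0∞} (hf : ContinuousOn f (Icc c d)) :
    MemLp f p (volume.restrict (Ioc c d)) := by
  obtain ⟨C, hC⟩ := isCompact_Icc.exists_bound_of_continuousOn hf
  exact .of_bound ((hf.mono Ioc_subset_Icc_self).aestronglyMeasurable measurableSet_Ioc) C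
    ((ae_restrict_mem measurableSet_Ioc).mono fun s hs => hC s (Ioc_subset_Icc_self hs))

lemma mEnergyAX_lt_top_iff_forall_dEnergy1_lt_top {n : ℕ} {a T : ℝ} {θ : ℝ → Fin n → ℝ}
    (hcont : ContinuousOn θ (Icc 0 T)) (hX : ∀ t ∈ Icc (0 : ℝ) T, θ t ∈ Xspace n) :
    mEnergyAX n a T θ < ⊤ ↔ ∀ j, dEnergy1 T (fun t => θ t j) < ⊤ := by
  have hdrift : ∀ j, MemLp (fun s => 2 * phiA a (θ s) j) 2 (volume.restrict (Ioc 0 T)) := fun j =>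
    memLp_Ioc_of_continuousOn_Icc
      (continuousOn_const.mul ((continuousOn_phiA a j).comp hcont hX))
  have hmeas : ∀ j, AEStronglyMeasurable (fun s => deriv (fun t => θ t j) s - 2 * phiA a (θ s) j)
      (volume.restrict (Ioc 0 T)) := fun j =>
    (measurable_deriv _).aestronglyMeasurable.sub (hdrift j).aestronglyMeasurable
  simp only [dEnergy1_lt_top_iff, forall_and, ← absCont_iff_forall_absCont1]
  unfold mEnergyAX
  split_ifs with hθ
  · rw [ofReal_mul_lt_top_iff one_half_pos, lintegral_ofReal_sum_sq_lt_top_iff_memLp hmeas,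
      and_iff_right hθ.2]
    exact forall_congr' fun j => memLp_sub_iff_of_memLp (hdrift j)
  · exact iff_of_false (lt_irrefl _) fun h => hθ ⟨hX, h.1⟩

lemma sInf_exit_spec {E : Type*} [TopologicalSpace E] {U : Set E} (hU : IsOpen U) {u : ℝ → E}
    {c d : ℝ} (hu : ContinuousOn u (Icc c d)) (hc : u c ∈ U)
    (hne : {t ∈ Icc c d | u t ∉ U}.Nonempty) :
    sInf {t ∈ Icc c d | u t ∉ U} ∈ Ioc c d ∧ u (sInf {t ∈ Icc c d | u t ∉ U}) ∉ U ∧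
      ∀ t ∈ Ico c (sInf {t ∈ Icc c d | u t ∉ U}), u t ∈ U := by
  set S := {t ∈ Icc c d | u t ∉ U}
  have hbdd : BddBelow S := ⟨c, fun t ht => ht.1.1⟩
  have hclosed : IsClosed S :=
    hu.preimage_isClosed_of_isClosed isClosed_Icc hU.isClosed_compl
  have hmem : sInf S ∈ S := hclosed.csInf_mem hne hbdd
  refine ⟨⟨hmem.1.1.lt_of_ne fun h => hmem.2 (h ▸ hc), hmem.1.2⟩, hmem.2, fun t ht => ?_⟩
  by_contra htU
  exact ht.2.not_ge (csInf_le hbdd ⟨⟨ht.1, ht.2.le.trans hmem.1.2⟩, htU⟩)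

/-- For a continuous weakly ordered `θ` on `[0,T]` started in `𝒳ₙ`:
(i) if the collision time `τ_coll = inf{t ∈ [0,T] : min gap = 0}` is attained in `[0,T]`
(i.e. the set of collision times is nonempty), then `sup_{t < τ_coll} J^a_t(θ) = ∞`;
(ii) if there is no collision on `[0,T]`, then `J^a_T(θ) < ∞` iff every component has
finite Dirichlet energy. -/
theorem finite_energy_iff_no_collision_and_finite_dirichlet
    (n : ℕ) (hn : 1 ≤ n) (T a : ℝ) (hT : 0 < T) (ha : 0 < a)
    (θ : ℝ → Fin n → ℝ)
    (hcont : ContinuousOn θ (Icc 0 T))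
    (h0 : θ 0 ∈ Xspace n)
    (horder : ∀ t ∈ Icc (0 : ℝ) T,
      (∀ i j : Fin n, i ≤ j → θ t i ≤ θ t j) ∧ ∀ i j : Fin n, θ t i ≤ θ t j + 2 * π) :
    (∀ τ : ℝ,
      ({t ∈ Icc (0 : ℝ) T | minGap (θ t) = 0}).Nonempty →
      τ = sInf {t ∈ Icc (0 : ℝ) T | minGap (θ t) = 0} →
      (⨆ t ∈ Ico (0 : ℝ) τ, mEnergyAX n a t θ) = ⊤) ∧
    ((∀ t ∈ Icc (0 : ℝ) T, minGap (θ t) ≠ 0) →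
      (mEnergyAX n a T θ < ⊤ ↔ ∀ j : Fin n, dEnergy1 T (fun t => θ t j) < ⊤)) := by
  have hclosed : ∀ t ∈ Icc (0 : ℝ) T, θ t ∈ closedXspace n := horder
  have hcoll : ∀ t ∈ Icc (0 : ℝ) T, minGap (θ t) = 0 ↔ θ t ∉ Xspace n := fun t ht =>
    minGap_eq_zero_iff_notMem_Xspace hn (hclosed t ht)
  refine ⟨fun τ hne hτ => ?_, fun h => ?_⟩
  · have hset : {t ∈ Icc (0 : ℝ) T | minGap (θ t) = 0} = {t ∈ Icc (0 : ℝ) T | θ t ∉ Xspace n} :=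
      Set.ext fun t => and_congr_right (hcoll t)
    rw [hset] at hne hτ
    obtain ⟨hτT, hτX, hX⟩ := hτ ▸ sInf_exit_spec (isOpen_Xspace n) hcont h0 hne
    have hτ' : τ ∈ Icc 0 T := Ioc_subset_Icc_self hτT
    exact iSup_mEnergyAX_eq_top_of_notMem_Xspace ha hτT.1
      ((hcont τ hτ').mono_of_mem_nhdsWithin (Icc_mem_nhdsLT_of_mem hτT)) hX (hclosed τ hτ') hτX
  · exact mEnergyAX_lt_top_iff_forall_dEnergy1_lt_top hcont fun t ht =>
      not_not.1 ((hcoll t ht).not.1 (h t ht))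

end
end

section
/- Fix T, S > 0 and let σ : [0,S] → [0,T] be a strictly increasing differentiable bijection with σ(0) = 0 whose derivative σ' is uniformly bounded away from zero and infinity (i.e., 0 < inf_{t∈[0,S]} σ'(t) and sup_{t∈[0,S]} σ'(t) < ∞). For a continuous θ : [0,T] → 𝒳ₙ define the time-changed function θ̂_t := θ_{σ(t)} for t ∈ [0,S]. Then J_T(θ) < ∞ if and only if J_S(θ̂) < ∞. -/
/-!
On a compact time interval a path in `𝒳ₙ` of finite energy is continuous, hence stays in a compact
subset of `𝒳ₙ`, where the drift `2φ` is bounded. The energy is therefore finite exactly when the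
path is absolutely continuous with square-integrable derivative. Since `(θ ∘ σ)' = σ' · (θ' ∘ σ)`,
the change of variables `u = σ(s)` gives `∫ |(θ ∘ σ)'|² = ∫ (σ' ∘ σ⁻¹) |θ'|² ≤ sup σ' · ∫ |θ'|²`,
so finiteness passes from `θ` to `θ ∘ σ`. The inverse of `σ` is a time change with derivative at
most `1 / inf σ'`, and applying the same implication to it gives the converse.
-/

open MeasureTheory Filter Set
open scoped Real Topology ENNReal Classical

noncomputable section

section ContinuousInverse

variable {α β : Type*} [TopologicalSpace α] [TopologicalSpace β] [T2Space β]

lemma continuousOn_of_invOn_of_isCompact {f : α → β} {g : β → α} {K : Set α} {t : Set β}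
    (hK : IsCompact K) (hf : ContinuousOn f K) (hg : MapsTo g t K) (hinv : InvOn g f K t) :
    ContinuousOn g t := by
  refine continuousOn_iff_isClosed.2 fun C hC => ⟨f '' (C ∩ K), ?_, ?_⟩
  · exact ((hK.inter_left hC).image_of_continuousOn (hf.mono inter_subset_right)).isClosed
  · ext y
    refine and_congr_left fun hy => ⟨fun hyC => ⟨g y, ⟨hyC, hg hy⟩, hinv.2 hy⟩, ?_⟩
    rintro ⟨x, ⟨hxC, hxK⟩, rfl⟩
    simpa only [mem_preimage, hinv.1 hxK] using hxC

end ContinuousInverse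

section ChainRule

variable {𝕜 F : Type*} [NontriviallyNormedField 𝕜] [NormedAddCommGroup F] [NormedSpace 𝕜 F]

-- When `f` is not differentiable at `σ a`, neither is `f ∘ σ` at `a`, because `f = f ∘ σ ∘ τ` near
-- `σ a`; both derivatives then have the junk value `0`.
lemma deriv_comp_of_eventually_rightInverse (f : 𝕜 → F) {σ τ : 𝕜 → 𝕜} {σ' a : 𝕜}
    (hσ : HasDerivAt σ σ' a) (hτ : DifferentiableAt 𝕜 τ (σ a)) (hτa : τ (σ a) = a)
    (hστ : ∀ᶠ y in 𝓝 (σ a), σ (τ y) = y) :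
    deriv (fun t => f (σ t)) a = σ' • deriv f (σ a) := by
  by_cases hf : DifferentiableAt 𝕜 f (σ a)
  · exact (hf.hasDerivAt.scomp a hσ).deriv
  have hfσ : ¬ DifferentiableAt 𝕜 (fun t => f (σ t)) a := by
    intro hd
    rw [← hτa] at hd
    refine hf ((hd.comp (σ a) hτ).congr_of_eventuallyEq ?_)
    filter_upwards [hστ] with y hy
    exact congrArg f hy.symm
  rw [deriv_zero_of_not_differentiableAt hf, deriv_zero_of_not_differentiableAt hfσ, smul_zero]

end ChainRule

section SquareIntegrability

variable {α ι : Type*} [MeasurableSpace α] {μ : Measure α} [IsFiniteMeasure μ] [Fintype ι]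

lemma lintegral_sum_sub_sq_lt_top {f g : α → ι → ℝ} {K : ℝ} (hg : ∀ᵐ x ∂μ, ∑ j, g x j ^ 2 ≤ K)
    (hf : ∫⁻ x, ENNReal.ofReal (∑ j, f x j ^ 2) ∂μ < ⊤) :
    ∫⁻ x, ENNReal.ofReal (∑ j, (f x j - g x j) ^ 2) ∂μ < ⊤ := by
  have hpointwise : ∀ᵐ x ∂μ, ENNReal.ofReal (∑ j, (f x j - g x j) ^ 2) ≤
      2 * ENNReal.ofReal (∑ j, f x j ^ 2) + ENNReal.ofReal (2 * K) := by
    filter_upwards [hg] with x hx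
    have hsum : ∑ j, (f x j - g x j) ^ 2 ≤ 2 * ∑ j, f x j ^ 2 + 2 * ∑ j, g x j ^ 2 := by
      rw [Finset.mul_sum, Finset.mul_sum, ← Finset.sum_add_distrib]
      refine Finset.sum_le_sum fun j _ => ?_
      linarith [sq_nonneg (f x j + g x j)]
    calc ENNReal.ofReal (∑ j, (f x j - g x j) ^ 2)
        ≤ ENNReal.ofReal (2 * ∑ j, f x j ^ 2 + 2 * K) :=
          ENNReal.ofReal_le_ofReal (by linarith)
      _ ≤ ENNReal.ofReal (2 * ∑ j, f x j ^ 2) + ENNReal.ofReal (2 * K) := ENNReal.ofReal_add_le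
      _ = 2 * ENNReal.ofReal (∑ j, f x j ^ 2) + ENNReal.ofReal (2 * K) := by
          rw [ENNReal.ofReal_mul zero_le_two, ENNReal.ofReal_ofNat]
  refine (lintegral_mono_ae hpointwise).trans_lt ?_
  rw [lintegral_add_right _ measurable_const, lintegral_const_mul' _ _ ENNReal.ofNat_ne_top,
    lintegral_const]
  exact ENNReal.add_lt_top.2 ⟨ENNReal.mul_lt_top ENNReal.ofNat_lt_top hf,
    ENNReal.mul_lt_top ENNReal.ofReal_lt_top (measure_lt_top μ univ)⟩

lemma lintegral_sum_sub_sq_lt_top_iff {f g : α → ι → ℝ} {K : ℝ}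
    (hg : ∀ᵐ x ∂μ, ∑ j, g x j ^ 2 ≤ K) :
    ∫⁻ x, ENNReal.ofReal (∑ j, (f x j - g x j) ^ 2) ∂μ < ⊤ ↔
      ∫⁻ x, ENNReal.ofReal (∑ j, f x j ^ 2) ∂μ < ⊤ := by
  refine ⟨fun h => ?_, lintegral_sum_sub_sq_lt_top hg⟩
  have hneg : ∀ᵐ x ∂μ, ∑ j, (-g x j) ^ 2 ≤ K := by simpa only [neg_sq] using hg
  simpa only [sub_neg_eq_add, sub_add_cancel] using lintegral_sum_sub_sq_lt_top hneg h

end SquareIntegrability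

section Drift

variable {n : ℕ}

lemma sin_half_sub_ne_zero {x : Fin n → ℝ} (hx : x ∈ Xspace n) {j k : Fin n} (hjk : j ≠ k) :
    Real.sin ((x j - x k) / 2) ≠ 0 := by
  have hne : x j - x k ≠ 0 := sub_ne_zero.2 (hx.1.injective.ne hjk)
  have hlt : x j < x k + 2 * π := hx.2 j k
  have hgt : x k < x j + 2 * π := hx.2 k j
  exact mt (Real.sin_eq_zero_iff_of_lt_of_lt (by linarith) (by linarith)).1
    (div_ne_zero hne two_ne_zero)

lemma continuousOn_phi (j : Fin n) : ContinuousOn (fun x => phi x j) (Xspace n) := by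
  simp only [phi, Real.cot_eq_cos_div_sin]
  exact continuousOn_finsetSum _ fun k hk => ContinuousOn.div (by fun_prop) (by fun_prop)
    fun x hx => sin_half_sub_ne_zero hx (Finset.ne_of_mem_erase hk).symm

lemma exists_sum_sq_two_mul_phi_le {α : Type*} [TopologicalSpace α] {K : Set α} (hK : IsCompact K)
    {θ : α → Fin n → ℝ} (hθ : ContinuousOn θ K) (hX : MapsTo θ K (Xspace n)) :
    ∃ M, ∀ t ∈ K, ∑ j, (2 * phi (θ t) j) ^ 2 ≤ M := by
  have hcont : ContinuousOn (fun t => ∑ j, (2 * phi (θ t) j) ^ 2) K :=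
    continuousOn_finsetSum _ fun j _ =>
      (continuousOn_const.mul ((continuousOn_phi j).comp hθ hX)).pow 2
  obtain ⟨M, hM⟩ := hK.bddAbove_image hcont
  exact ⟨M, fun t ht => hM (mem_image_of_mem _ ht)⟩

end Drift

section Energy

/-- Twice the Dirichlet energy without drift of a path on `[0, T]`. The open interval changes
nothing for the integral, and on it `deriv` only sees the values of the path on `[0, T]`. -/
def dirichletEnergy {ι : Type*} [Fintype ι] (T : ℝ) (θ : ℝ → ι → ℝ) : ℝ≥0∞ :=
  ∫⁻ s in Ioo 0 T, ENNReal.ofReal (∑ j, deriv (fun t => θ t j) s ^ 2)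

variable {n : ℕ} {T : ℝ} {θ η : ℝ → Fin n → ℝ}

lemma AbsCont.continuousOn (h : AbsCont T θ) : ContinuousOn θ (Icc 0 T) := by
  rcases lt_or_ge T 0 with hT | hT
  · simp [Icc_eq_empty_of_lt hT]
  obtain ⟨v, hv, hθ⟩ := h
  refine continuousOn_pi.2 fun j => ContinuousOn.congr ?_ fun t ht => hθ t ht j
  rw [← uIcc_of_le hT] at hv ⊢
  exact continuousOn_const.add (intervalIntegral.continuousOn_primitive_interval (hv j))

lemma AbsCont.congr (hθ : AbsCont T θ) (h : EqOn θ η (Icc 0 T)) : AbsCont T η := by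
  obtain ⟨v, hv, hθ⟩ := hθ
  refine ⟨v, hv, fun t ht j => ?_⟩
  rw [← h ht, ← h (left_mem_Icc.2 (ht.1.trans ht.2))]
  exact hθ t ht j

lemma mEnergy_congr (h : EqOn θ η (Icc 0 T)) : mEnergy n T θ = mEnergy n T η := by
  have hac : AbsCont T θ ↔ AbsCont T η := ⟨fun hθ => hθ.congr h, fun hη => hη.congr h.symm⟩
  simp only [mEnergy, hac, ← restrict_Ioo_eq_restrict_Ioc]
  congr 2
  refine setLIntegral_congr_fun measurableSet_Ioo fun s hs => ?_
  have hev : θ =ᶠ[𝓝 s] η := h.eventuallyEq_of_mem (Icc_mem_nhds hs.1 hs.2)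
  have hderiv (j : Fin n) : deriv (fun t => θ t j) s = deriv (fun t => η t j) s :=
    (hev.fun_comp (· j)).deriv_eq
  simp only [hderiv, hev.eq_of_nhds]

lemma mEnergy_lt_top_iff (hX : MapsTo θ (Icc 0 T) (Xspace n)) :
    mEnergy n T θ < ⊤ ↔ AbsCont T θ ∧ dirichletEnergy T θ < ⊤ := by
  by_cases hac : AbsCont T θ
  · obtain ⟨M, hM⟩ := exists_sum_sq_two_mul_phi_le isCompact_Icc hac.continuousOn hX
    have hdrift : ∀ᵐ s ∂volume.restrict (Ioo 0 T), ∑ j, (2 * phi (θ s) j) ^ 2 ≤ M :=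
      ae_restrict_of_forall_mem measurableSet_Ioo fun s hs => hM s (Ioo_subset_Icc_self hs)
    rw [mEnergy, if_pos hac, dirichletEnergy, ← restrict_Ioo_eq_restrict_Ioc,
      ← lintegral_sum_sub_sq_lt_top_iff hdrift]
    have hhalf : ENNReal.ofReal (1 / 2) ≠ 0 := (ENNReal.ofReal_pos.2 one_half_pos).ne'
    simp only [hac, true_and, lt_top_iff_ne_top, ne_eq, ENNReal.mul_eq_top, hhalf,
      ENNReal.ofReal_ne_top, not_false_eq_true, false_and, or_false]
  · simp [mEnergy, hac]

end Energy

/-- The function `σ` is a time change from `[0, S]` onto `[0, T]` with derivative `σ'`: it is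
continuous, sends endpoints to endpoints and has a positive derivative on `(0, S)`. Bounds on `σ'`
are left out, so that the inverse of a time change is again one. -/
structure IsTimeChange (σ σ' : ℝ → ℝ) (S T : ℝ) : Prop where
  nonneg : 0 ≤ S
  map_zero : σ 0 = 0
  map_right : σ S = T
  continuousOn : ContinuousOn σ (Icc 0 S)
  hasDerivAt : ∀ s ∈ Ioo 0 S, HasDerivAt σ (σ' s) s
  deriv_pos : ∀ s ∈ Ioo 0 S, 0 < σ' s

namespace IsTimeChange

variable {σ σ' : ℝ → ℝ} {S T : ℝ}

lemma strictMonoOn (h : IsTimeChange σ σ' S T) : StrictMonoOn σ (Icc 0 S) := by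
  refine strictMonoOn_of_deriv_pos (convex_Icc 0 S) h.continuousOn fun s hs => ?_
  rw [interior_Icc] at hs
  exact (h.hasDerivAt s hs).deriv ▸ h.deriv_pos s hs

lemma bijOn_Icc (h : IsTimeChange σ σ' S T) : BijOn σ (Icc 0 S) (Icc 0 T) := by
  have himage : σ '' Icc 0 S = Icc 0 T := by
    rw [h.continuousOn.image_Icc_of_monotoneOn h.nonneg h.strictMonoOn.monotoneOn, h.map_zero,
      h.map_right]
  exact himage ▸ h.strictMonoOn.injOn.bijOn_image

lemma nonneg_right (h : IsTimeChange σ σ' S T) : 0 ≤ T :=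
  (h.bijOn_Icc.mapsTo (right_mem_Icc.2 h.nonneg)).1.trans_eq h.map_right

lemma image_Ioo (h : IsTimeChange σ σ' S T) : σ '' Ioo 0 S = Ioo 0 T := by
  rw [h.continuousOn.image_Ioo_of_strictMonoOn h.nonneg h.strictMonoOn, h.map_zero, h.map_right]

lemma mapsTo_Ioo (h : IsTimeChange σ σ' S T) : MapsTo σ (Ioo 0 S) (Ioo 0 T) :=
  mapsTo_iff_image_subset.2 h.image_Ioo.subset

lemma symm (h : IsTimeChange σ σ' S T) {τ : ℝ → ℝ} (hτ : MapsTo τ (Icc 0 T) (Icc 0 S))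
    (hinv : InvOn τ σ (Icc 0 S) (Icc 0 T)) :
    IsTimeChange τ (fun t => (σ' (τ t))⁻¹) T S := by
  have hcont : ContinuousOn τ (Icc 0 T) :=
    continuousOn_of_invOn_of_isCompact isCompact_Icc h.continuousOn hτ hinv
  have hτIoo : MapsTo τ (Ioo 0 T) (Ioo 0 S) := by
    rw [← h.image_Ioo]
    rintro _ ⟨s, hs, rfl⟩
    rwa [hinv.1 (Ioo_subset_Icc_self hs)]
  refine ⟨h.nonneg_right, ?_, ?_, hcont, fun t ht => ?_,
    fun t ht => inv_pos.2 (h.deriv_pos _ (hτIoo ht))⟩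
  · simpa only [h.map_zero] using hinv.1 (left_mem_Icc.2 h.nonneg)
  · simpa only [h.map_right] using hinv.1 (right_mem_Icc.2 h.nonneg)
  · have hnhds : Icc 0 T ∈ 𝓝 t := Icc_mem_nhds ht.1 ht.2
    exact HasDerivAt.of_local_left_inverse (hcont.continuousAt hnhds) (h.hasDerivAt _ (hτIoo ht))
      (h.deriv_pos _ (hτIoo ht)).ne' (mem_of_superset hnhds hinv.2)

lemma exists_inverse (h : IsTimeChange σ σ' S T) :
    ∃ τ, IsTimeChange τ (fun t => (σ' (τ t))⁻¹) T S ∧ InvOn τ σ (Icc 0 S) (Icc 0 T) :=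
  have hinv := h.bijOn_Icc.invOn_invFunOn
  ⟨_, h.symm h.bijOn_Icc.surjOn.mapsTo_invFunOn hinv, hinv⟩

lemma deriv_comp (h : IsTimeChange σ σ' S T) {F : Type*} [NormedAddCommGroup F]
    [NormedSpace ℝ F] (f : ℝ → F) {s : ℝ} (hs : s ∈ Ioo 0 S) :
    deriv (fun t => f (σ t)) s = σ' s • deriv f (σ s) := by
  obtain ⟨τ, hτ, hinv⟩ := h.exists_inverse
  have hσs := h.mapsTo_Ioo hs
  exact deriv_comp_of_eventually_rightInverse f (h.hasDerivAt s hs)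
    (hτ.hasDerivAt _ hσs).differentiableAt (hinv.1 (Ioo_subset_Icc_self hs))
    (mem_of_superset (Icc_mem_nhds hσs.1 hσs.2) hinv.2)

lemma restrict (h : IsTimeChange σ σ' S T) {s : ℝ} (hs : s ∈ Icc 0 S) :
    IsTimeChange σ σ' s (σ s) where
  nonneg := hs.1
  map_zero := h.map_zero
  map_right := rfl
  continuousOn := h.continuousOn.mono (Icc_subset_Icc_right hs.2)
  hasDerivAt := fun u hu => h.hasDerivAt u (Ioo_subset_Ioo_right hs.2 hu)
  deriv_pos := fun u hu => h.deriv_pos u (Ioo_subset_Ioo_right hs.2 hu)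

section ChangeOfVariables

variable {F : Type*} [NormedAddCommGroup F] [NormedSpace ℝ F]

lemma integrableOn_smul_comp_iff (h : IsTimeChange σ σ' S T) (v : ℝ → F) :
    IntegrableOn (fun s => σ' s • v (σ s)) (Icc 0 S) ↔ IntegrableOn v (Icc 0 T) := by
  rw [integrableOn_Icc_deriv_smul_iff_of_deriv_nonneg h.continuousOn h.hasDerivAt
    (fun s hs => (h.deriv_pos s hs).le) h.nonneg, h.map_zero, h.map_right]

lemma intervalIntegral_smul_comp (h : IsTimeChange σ σ' S T) (v : ℝ → F) :
    ∫ s in 0..S, σ' s • v (σ s) = ∫ t in 0..T, v t := by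
  rw [intervalIntegral.integral_of_le h.nonneg,
    intervalIntegral.integral_of_le h.nonneg_right,
    ← integral_Icc_eq_integral_Ioc, ← integral_Icc_eq_integral_Ioc,
    integral_Icc_deriv_smul_of_deriv_nonneg h.continuousOn h.hasDerivAt
      (fun s hs => (h.deriv_pos s hs).le) h.nonneg, h.map_zero, h.map_right]

end ChangeOfVariables

lemma absCont_comp (h : IsTimeChange σ σ' S T) {n : ℕ} {θ : ℝ → Fin n → ℝ} (hθ : AbsCont T θ) :
    AbsCont S (fun s => θ (σ s)) := by
  obtain ⟨v, hv, hθ⟩ := hθ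
  refine ⟨fun s j => σ' s • v (σ s) j,
    fun j => (h.integrableOn_smul_comp_iff fun t => v t j).2 (hv j), fun s hs j => ?_⟩
  simp only [(h.restrict hs).intervalIntegral_smul_comp fun t => v t j, h.map_zero]
  exact hθ (σ s) (h.bijOn_Icc.mapsTo hs) j

lemma dirichletEnergy_comp_le (h : IsTimeChange σ σ' S T) {C : ℝ}
    (hup : ∀ s ∈ Ioo 0 S, σ' s ≤ C) {ι : Type*} [Fintype ι] (θ : ℝ → ι → ℝ) :
    dirichletEnergy S (fun s => θ (σ s)) ≤ ENNReal.ofReal C * dirichletEnergy T θ := by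
  set e : ℝ → ℝ≥0∞ := fun t => ENNReal.ofReal (∑ j, deriv (fun u => θ u j) t ^ 2) with he
  have hchain : ∀ s ∈ Ioo 0 S, ENNReal.ofReal (∑ j, deriv (fun u => θ (σ u) j) s ^ 2) =
      ENNReal.ofReal (σ' s) * (ENNReal.ofReal (σ' s) * e (σ s)) := by
    intro s hs
    have hσ' : 0 ≤ σ' s := (h.deriv_pos s hs).le
    have hderiv (j : ι) : deriv (fun u => θ (σ u) j) s = σ' s * deriv (fun u => θ u j) (σ s) :=
      h.deriv_comp (fun u => θ u j) hs
    simp only [he, hderiv, mul_pow, ← Finset.mul_sum, sq (σ' s), mul_assoc, ENNReal.ofReal_mul hσ']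
  calc dirichletEnergy S (fun s => θ (σ s))
      = ∫⁻ s in Ioo 0 S, ENNReal.ofReal (σ' s) * (ENNReal.ofReal (σ' s) * e (σ s)) :=
        setLIntegral_congr_fun measurableSet_Ioo hchain
    _ ≤ ∫⁻ s in Ioo 0 S, ENNReal.ofReal C * (ENNReal.ofReal (σ' s) * e (σ s)) :=
        setLIntegral_mono' measurableSet_Ioo fun s hs => by gcongr; exact hup s hs
    _ = ENNReal.ofReal C * ∫⁻ s in Ioo 0 S, ENNReal.ofReal (σ' s) * e (σ s) :=
        lintegral_const_mul' _ _ ENNReal.ofReal_ne_top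
    _ = ENNReal.ofReal C * dirichletEnergy T θ := by
        rw [dirichletEnergy, ← h.image_Ioo, lintegral_image_eq_lintegral_deriv_mul_of_monotoneOn
          measurableSet_Ioo (fun s hs => (h.hasDerivAt s hs).hasDerivWithinAt)
          (h.strictMonoOn.monotoneOn.mono Ioo_subset_Icc_self)]

lemma mEnergy_comp_lt_top (h : IsTimeChange σ σ' S T) {C : ℝ} (hup : ∀ s ∈ Ioo 0 S, σ' s ≤ C)
    {n : ℕ} {θ : ℝ → Fin n → ℝ} (hX : MapsTo θ (Icc 0 T) (Xspace n))
    (hθ : mEnergy n T θ < ⊤) : mEnergy n S (fun s => θ (σ s)) < ⊤ := by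
  obtain ⟨hac, hfin⟩ := (mEnergy_lt_top_iff hX).1 hθ
  exact (mEnergy_lt_top_iff (hX.comp h.bijOn_Icc.mapsTo)).2 ⟨h.absCont_comp hac,
    (h.dirichletEnergy_comp_le hup θ).trans_lt (ENNReal.mul_lt_top ENNReal.ofReal_lt_top hfin)⟩

end IsTimeChange

theorem mEnergy_finite_iff_time_change_general {n : ℕ} {S T c C : ℝ} {σ σ' : ℝ → ℝ}
    (hσ : IsTimeChange σ σ' S T) (hc : 0 < c) (hlow : ∀ s ∈ Ioo 0 S, c ≤ σ' s)
    (hup : ∀ s ∈ Ioo 0 S, σ' s ≤ C) {θ : ℝ → Fin n → ℝ} (hX : MapsTo θ (Icc 0 T) (Xspace n)) :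
    mEnergy n T θ < ⊤ ↔ mEnergy n S (fun s => θ (σ s)) < ⊤ := by
  refine ⟨hσ.mEnergy_comp_lt_top hup hX, fun hfin => ?_⟩
  obtain ⟨τ, hτ, hinv⟩ := hσ.exists_inverse
  have hτup : ∀ t ∈ Ioo 0 T, (σ' (τ t))⁻¹ ≤ c⁻¹ :=
    fun t ht => inv_anti₀ hc (hlow _ (hτ.mapsTo_Ioo ht))
  have hστ : EqOn (fun t => θ (σ (τ t))) θ (Icc 0 T) := fun t ht => congrArg θ (hinv.2 ht)
  rw [← mEnergy_congr hστ]
  exact hτ.mEnergy_comp_lt_top hτup (hX.comp hσ.bijOn_Icc.mapsTo) hfin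

/-- Finiteness of the multiradial Dirichlet energy is preserved under
time changes `σ : [0,S] → [0,T]` which are strictly increasing differentiable bijections
with `σ(0) = 0` and derivative bounded away from `0` and `∞`. -/
theorem mEnergy_finite_iff_time_change
    (n : ℕ) (hn : 1 ≤ n) (T S : ℝ) (hT : 0 < T) (hS : 0 < S)
    (σ σ' : ℝ → ℝ)
    (hσ0 : σ 0 = 0) (hσS : σ S = T)
    (hmono : StrictMonoOn σ (Icc 0 S))
    (hderiv : ∀ t ∈ Icc (0 : ℝ) S, HasDerivWithinAt σ (σ' t) (Icc 0 S) t)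
    (hlow : ∃ c : ℝ, 0 < c ∧ ∀ t ∈ Icc (0 : ℝ) S, c ≤ σ' t)
    (hup : ∃ C : ℝ, ∀ t ∈ Icc (0 : ℝ) S, σ' t ≤ C)
    (θ : ℝ → Fin n → ℝ)
    (hcont : ContinuousOn θ (Icc 0 T))
    (hX : ∀ t ∈ Icc (0 : ℝ) T, θ t ∈ Xspace n) :
    mEnergy n T θ < ⊤ ↔ mEnergy n S (fun t => θ (σ t)) < ⊤ := by
  obtain ⟨c, hc, hlow⟩ := hlow
  obtain ⟨C, hup⟩ := hup
  have hσ : IsTimeChange σ σ' S T :=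
    ⟨hS.le, hσ0, hσS, fun s hs => (hderiv s hs).continuousWithinAt,
      fun s hs => (hderiv s (Ioo_subset_Icc_self hs)).hasDerivAt (Icc_mem_nhds hs.1 hs.2),
      fun s hs => hc.trans_le (hlow s (Ioo_subset_Icc_self hs))⟩
  exact mEnergy_finite_iff_time_change_general hσ hc
    (fun s hs => hlow s (Ioo_subset_Icc_self hs)) (fun s hs => hup s (Ioo_subset_Icc_self hs)) hX

end
end
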